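/- Let G be a forest, that is, a finite simple graph with no cycles. Then G admits an adapted complex structure if and only if G has an even number of connected components and each connected component of G contains at most one vertex of even degree. -/

import Mathlib

/-!  Framework: the 2-step nilpotent Lie algebra `𝔫_G` associated to a finite simple
graph `G` (Dani–Mainkar construction), and adapted complex structures on it. -/

open scoped BigOperators

namespace GraphLie

variable {V : Type*} [Fintype V] [LinearOrder V]

/-- The underlying real vector space of the Lie algebra `𝔫_G` associated to a graph `G`:
real-valued functions on its basis `V ⊕ G.edgeSet` (vertices and edges). -/
abbrev Niln (G : SimpleGraph V) : Type _ := (V ⊕ G.edgeSet) → ℝ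

variable (G : SimpleGraph V) [DecidableRel G.Adj]

/-- The basis vector of `𝔫_G` corresponding to the vertex `v`. -/
noncomputable def vtx (v : V) : Niln G := Pi.single (Sum.inl v) 1

/-- The basis vector of `𝔫_G` corresponding to the edge `e`. -/
noncomputable def edg (e : G.edgeSet) : Niln G := Pi.single (Sum.inr e) 1

/-- The basis vector of `𝔫_G` corresponding to a vertex or an edge. -/
noncomputable def basisVec (b : V ⊕ G.edgeSet) : Niln G := Pi.single b 1

/-- The bracket of two vertex generators: for adjacent vertices `i < j` (with respect to
the chosen labeling of the vertices) `[v_i, v_j] = e_{i,j}` and `[v_j, v_i] = -e_{i,j}`;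
non-adjacent vertices commute. -/
noncomputable def bracketVtx (i j : V) : Niln G :=
  if h : G.Adj i j then
    (if i < j then edg G ⟨s(i, j), G.mem_edgeSet.mpr h⟩
     else - edg G ⟨s(i, j), G.mem_edgeSet.mpr h⟩)
  else 0

/-- The Lie bracket of `𝔫_G`, extended bilinearly from the generators; all the
edge generators are central. -/
noncomputable def bracket (x y : Niln G) : Niln G :=
  ∑ i : V, ∑ j : V, (x (Sum.inl i) * y (Sum.inl j)) • bracketVtx G i j

/-- An adapted complex structure on the graph `G`: a linear endomorphism `J` of `𝔫_G`
with `J ∘ J = -id`, whose Nijenhuis tensor vanishes, and which sends each basis vector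
(vertex or edge) to plus or minus a basis vector. -/
structure AdaptedCS : Type _ where
  J : Niln G →ₗ[ℝ] Niln G
  j_squared : ∀ x, J (J x) = -x
  integrable : ∀ x y,
    bracket G x y + J (bracket G (J x) y + bracket G x (J y)) - bracket G (J x) (J y) = 0
  adapted : ∀ b : V ⊕ G.edgeSet,
    (∃ b', J (basisVec G b) = basisVec G b') ∨ (∃ b', J (basisVec G b) = - basisVec G b')

variable {G}

/-- An edge of `G` joining vertices `v` and `w` is distinguished if `Jv = w` or `Jw = v`. -/
def AdaptedCS.Distinguished (Jc : AdaptedCS G) (e : G.edgeSet) : Prop :=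
  ∃ v w : V, (e : Sym2 V) = s(v, w) ∧
    (Jc.J (vtx G v) = vtx G w ∨ Jc.J (vtx G w) = vtx G v)

end GraphLie

/-!
An adapted complex structure `J` induces a fixed-point-free involution of `V ∪ E`, so `|V| + |E|` is
even; for a forest with `c` components `|E| + c = |V|`, hence `c` is even.

In a forest, at most one neighbor `w` of a vertex `c` can be equal or adjacent to `±J c`; call it
the parent of `c`. The vanishing of the Nijenhuis tensor at the two ends of an edge forces one end
to be the parent of the other, and `J` pairs up the remaining neighbors of each vertex. So a vertex
has even degree exactly when it has no parent. On a path starting at a vertex without parent each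
vertex is the parent of the next one, so a component has at most one vertex of even degree.

Conversely, root every component at its vertex of even degree, or at any vertex `r` if all degrees
are odd; in that case one child of `r` is declared to be the parent of `r` as well. The other
children of each vertex come in pairs, which `J` exchanges. It then exchanges the two edges joining
such a pair to its common parent, with the sign making `J [p, w] = [p, J w]`, and exchanges `r` with
its chosen child. Parity allows the leftover vertices and edges to be paired arbitrarily.
-/

namespace GraphLie

open Sum Function SimpleGraph

section Pairing

variable {α : Type*}

theorem even_card_of_involution {S : Finset α} (σ : α → α) (hmem : ∀ a ∈ S, σ a ∈ S)
    (hne : ∀ a ∈ S, σ a ≠ a) (hinv : ∀ a ∈ S, σ (σ a) = a) : Even S.card := by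
  have hsum : ∑ _a ∈ S, (1 : ZMod 2) = 0 :=
    Finset.sum_involution (fun a _ => σ a) (fun _ _ => by decide) (fun a ha _ => hne a ha)
      hmem hinv
  rw [Finset.sum_const, nsmul_one] at hsum
  exact ZMod.natCast_eq_zero_iff_even.1 hsum

theorem exists_involutive_ne_iff_mem {S : Finset α} (hS : Even S.card) :
    ∃ σ : α → α, Involutive σ ∧ ∀ a, σ a ≠ a ↔ a ∈ S := by
  classical
  obtain ⟨k, hk⟩ := hS
  let e : S ≃ Fin k ⊕ Fin k := Fintype.equivOfCardEq (by simp [hk])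
  refine ⟨fun a => if h : a ∈ S then e.symm (e ⟨a, h⟩).swap else a, fun a => ?_, fun a => ?_⟩
  · by_cases ha : a ∈ S <;> simp [ha]
  · by_cases ha : a ∈ S
    · have hne : (e ⟨a, ha⟩).swap ≠ e ⟨a, ha⟩ := by cases e ⟨a, ha⟩ <;> simp
      simpa [ha, Subtype.ext_iff] using mt e.symm_apply_eq.1 hne
    · simp [ha]

/-- The sign `1` or `-1` of the ordered pair `(a, b)`: it is the sign with which the edge joining
two adjacent vertices `a` and `b` occurs in the bracket `[a, b]` of `𝔫_G`. -/
def orderSign [LinearOrder α] (a b : α) : ℝ := if a < b then 1 else -1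

theorem orderSign_mul_self [LinearOrder α] (a b : α) : orderSign a b * orderSign a b = 1 := by
  unfold orderSign
  split_ifs <;> norm_num

theorem orderSign_swap [LinearOrder α] {a b : α} (h : a ≠ b) :
    orderSign b a = -orderSign a b := by
  rcases h.lt_or_gt with hlt | hlt <;> simp [orderSign, hlt, hlt.not_gt]

/-- A signed involution: an involution `σ` with a sign `s a = ±1` at every point, the signs of `a`
and `σ a` being opposite. This is the combinatorial content of an endomorphism with square `-1`
that permutes a basis up to signs; in particular `σ` has no fixed points. -/
structure IsSignedInvolution (σ : α → α) (s : α → ℝ) : Prop where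
  involutive : Involutive σ
  sign_mul_self : ∀ a, s a * s a = 1
  sign_apply : ∀ a, s (σ a) = -s a

variable {σ ρ : α → α} {s : α → ℝ}

theorem IsSignedInvolution.sign_ne_zero (h : IsSignedInvolution σ s) (a : α) : s a ≠ 0 :=
  left_ne_zero_of_mul_eq_one (h.sign_mul_self a)

theorem IsSignedInvolution.apply_ne (h : IsSignedInvolution σ s) (a : α) : σ a ≠ a := by
  intro heq
  have hneg := h.sign_apply a
  rw [heq, self_eq_neg] at hneg
  exact h.sign_ne_zero a hneg

theorem IsSignedInvolution.even_card [Fintype α] (h : IsSignedInvolution σ s) :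
    Even (Fintype.card α) :=
  even_card_of_involution (S := Finset.univ) σ (fun _ _ => Finset.mem_univ _)
    (fun a _ => h.apply_ne a) fun a _ => h.involutive a

theorem exists_isSignedInvolution_extending [Fintype α] (hα : Even (Fintype.card α))
    (hρ : Involutive ρ) (hs : ∀ a, s a * s a = 1) (hsρ : ∀ a, ρ a ≠ a → s (ρ a) = -s a) :
    ∃ σ t, IsSignedInvolution σ t ∧ ∀ a, ρ a ≠ a → σ a = ρ a ∧ t a = s a := by
  classical
  let _ : LinearOrder α := linearOrderOfSTO WellOrderingRel
  have hmoved : Even (Finset.univ.filter fun a => ¬ρ a = a).card :=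
    even_card_of_involution ρ (by simp [hρ.injective.eq_iff]) (by simp) fun a _ => hρ a
  have hfixed : Even (Finset.univ.filter fun a => ρ a = a).card := by
    rw [← Finset.card_univ, ← Finset.card_filter_add_card_filter_not (fun a => ρ a = a),
      Nat.even_add] at hα
    exact hα.2 hmoved
  obtain ⟨ι, hι, hιne⟩ := exists_involutive_ne_iff_mem hfixed
  simp only [Finset.mem_filter, Finset.mem_univ, true_and] at hιne
  have hιfix : ∀ a, ρ a = a → ρ (ι a) = ι a := fun a ha =>
    (hιne _).1 (by rw [hι a]; exact ((hιne a).2 ha).symm)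
  refine ⟨fun a => if ρ a = a then ι a else ρ a,
    fun a => if ρ a = a then orderSign a (ι a) else s a,
    ⟨fun a => ?_, fun a => ?_, fun a => ?_⟩, fun a ha => by simp [ha]⟩
  all_goals by_cases ha : ρ a = a
  · simp [ha, hιfix a ha, hι a]
  · simp [ha, hρ a, Ne.symm ha]
  · simp [ha, orderSign_mul_self]
  · simp [ha, hs]
  · simp [ha, hιfix a ha, hι a, orderSign_swap ((hιne a).2 ha).symm]
  · simp [ha, hρ a, Ne.symm ha, hsρ a ha]

end Pairing

section Forest

variable {V : Type*} {G : SimpleGraph V}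

theorem eq_of_isAcyclic_of_adj_of_eq_or_adj (hG : G.IsAcyclic) {a b x y : V} (hab : a ≠ b)
    (hax : G.Adj a x) (hxb : x = b ∨ G.Adj x b) (hay : G.Adj a y) (hyb : y = b ∨ G.Adj y b) :
    x = y := by
  have hpath : ∀ z, G.Adj a z → z = b ∨ G.Adj z b → ∃ P : G.Path a b, P.1.snd = z := by
    rintro z haz (rfl | hzb)
    · exact ⟨Path.singleton haz, by simp [Path.singleton]⟩
    · exact ⟨⟨.cons haz hzb.toWalk, by simp [haz.ne, hzb.ne, hab]⟩, by simp⟩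
  obtain ⟨P, rfl⟩ := hpath x hax hxb
  obtain ⟨Q, rfl⟩ := hpath y hay hyb
  rw [(hG.subsingleton_path a b).elim P Q]

theorem exists_root {P : V → Prop} (huniq : ∀ v w, G.Reachable v w → P v → P w → v = w) :
    ∃ root : G.ConnectedComponent → V, (∀ C, G.connectedComponentMk (root C) = C) ∧
      ∀ v, P v → v = root (G.connectedComponentMk v) := by
  have hroot : ∀ C : G.ConnectedComponent, ∃ x, G.connectedComponentMk x = C ∧
      ∀ v, G.connectedComponentMk v = C → P v → v = x := fun C => by
    by_cases h : ∃ x, G.connectedComponentMk x = C ∧ P x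
    · obtain ⟨x, hx, hPx⟩ := h
      exact ⟨x, hx, fun v hv hPv => huniq v x (ConnectedComponent.exact (hv.trans hx.symm)) hPv hPx⟩
    · exact ⟨C.out, Quot.out_eq C, fun v hv hPv => (h ⟨v, hv, hPv⟩).elim⟩
  choose root hmk hroot using hroot
  exact ⟨root, hmk, fun v => hroot _ v rfl⟩

theorem exists_parent_of_isAcyclic (hG : G.IsAcyclic) {root : G.ConnectedComponent → V}
    (hroot : ∀ C, G.connectedComponentMk (root C) = C) :
    ∃ p : V → V, (∀ v, p v = v ↔ v ∈ Set.range root) ∧ (∀ v, p v ≠ v → G.Adj v (p v)) ∧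
      (∀ v, p (p v) = v → p v = v) ∧ ∀ v w, G.Adj v w → p v = w ∨ p w = v := by
  let r : V → V := fun v => root (G.connectedComponentMk v)
  have hreach : ∀ v, G.Reachable v (r v) := fun v =>
    (ConnectedComponent.exact (hroot _)).symm
  have hradj : ∀ {v w}, G.Adj v w → r v = r w := fun h =>
    congrArg root (ConnectedComponent.sound h.reachable)
  choose toRoot htoRoot using fun v => (hreach v).exists_isPath
  have hsnd : ∀ {v x : V} (P : G.Walk v x), P.IsPath → x = r v → (toRoot v).snd = P.snd := by
    rintro v x P hP rfl
    exact congrArg (fun Q : G.Path v (r v) => Q.1.snd)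
      ((hG.subsingleton_path v (r v)).elim ⟨_, htoRoot v⟩ ⟨P, hP⟩)
  have hroot_iff : ∀ v, (toRoot v).snd = v ↔ v = r v := fun v => by
    refine ⟨fun h => ?_, fun h => hsnd .nil .nil h⟩
    by_contra hne
    exact ((toRoot v).adj_snd (Walk.not_nil_of_ne hne)).ne h.symm
  have hadj : ∀ v, (toRoot v).snd ≠ v → G.Adj v (toRoot v).snd := fun v hv =>
    (toRoot v).adj_snd (Walk.not_nil_of_ne (mt (hroot_iff v).2 hv))
  refine ⟨fun v => (toRoot v).snd, fun v => (hroot_iff v).trans ?_, hadj, fun v hv => ?_,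
    fun v w h => ?_⟩
  · refine ⟨fun h => ⟨_, h.symm⟩, ?_⟩
    rintro ⟨C, rfl⟩
    exact congrArg root (hroot C).symm
  · by_contra hne
    have hnil : ¬(toRoot v).Nil := Walk.not_nil_of_ne (mt (hroot_iff v).2 hne)
    have hcons := htoRoot v
    rw [← Walk.cons_tail_eq _ hnil, Walk.cons_isPath_iff] at hcons
    have htail : (toRoot v).tail.snd = v := (hsnd _ hcons.1 (hradj (hadj v hne))).symm.trans hv
    have hmem : (toRoot v).tail.snd ∈ (toRoot v).tail.support := Walk.getVert_mem_support _ 1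
    rw [htail] at hmem
    exact hcons.2 hmem
  · by_cases hw : w ∈ (toRoot v).support
    · exact .inl (hG.eq_snd_of_adj_start (htoRoot v) h hw).symm
    · exact .inr (by simpa using hsnd _ ((htoRoot v).cons (h := h.symm) hw) (hradj h))

theorem card_edgeSet_eq_card_ne_parent {p : V → V} (hadj : ∀ v, p v ≠ v → G.Adj v (p v))
    (hpp : ∀ v, p (p v) = v → p v = v) (hcover : ∀ v w, G.Adj v w → p v = w ∨ p w = v) :
    Nat.card G.edgeSet = Nat.card {v // ¬p v = v} := by
  refine (Nat.card_eq_of_bijective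
    (fun v : {v // ¬p v = v} => (⟨s(v.1, p v.1), hadj v.1 v.2⟩ : G.edgeSet)) ⟨?_, ?_⟩).symm
  · rintro ⟨v, hv⟩ ⟨w, hw⟩ h
    simp only [Subtype.mk.injEq] at h ⊢
    rcases Sym2.eq_iff.1 (congrArg Subtype.val h) with ⟨h, -⟩ | ⟨h, h'⟩
    · exact h
    · exact absurd (hpp v (by rw [h', h])) hv
  · rintro ⟨e, he⟩
    induction e using Sym2.ind with | _ v w
    have hvw : G.Adj v w := he
    rcases hcover v w hvw with rfl | rfl
    · exact ⟨⟨v, hvw.ne'⟩, rfl⟩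
    · exact ⟨⟨w, hvw.ne⟩, Subtype.ext Sym2.eq_swap⟩

theorem card_edgeSet_add_card_connectedComponent [Finite V] (hG : G.IsAcyclic) :
    Nat.card G.edgeSet + Nat.card G.ConnectedComponent = Nat.card V := by
  classical
  have hout : ∀ C : G.ConnectedComponent, G.connectedComponentMk C.out = C := Quot.out_eq
  obtain ⟨p, hroot, hadj, hpp, hcover⟩ := exists_parent_of_isAcyclic hG hout
  have hroots : Nat.card G.ConnectedComponent = Nat.card {v // p v = v} := by
    simp only [hroot]
    exact (Nat.card_range_of_injective (LeftInverse.injective hout)).symm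
  rw [card_edgeSet_eq_card_ne_parent hadj hpp hcover, hroots, add_comm, ← Nat.card_sum]
  exact Nat.card_congr (Equiv.sumCompl fun v => p v = v)

end Forest

section SiblingPairing

variable {V : Type*} {q τ : V → V}

/-- `τ` is a sibling pairing for the parent function `q`: an involution that exchanges two vertices
which are parents of each other and pairs every other vertex with a different child of its parent.
A vertex of even degree is fixed, being its own parent. -/
structure IsSiblingPairing (q τ : V → V) : Prop where
  involutive : Involutive τ
  apply_of_mutual : ∀ w, q (q w) = w → τ w = q w
  apply_ne : ∀ w, q (q w) ≠ w → τ w ≠ w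
  parent_apply : ∀ w, q (q w) ≠ w → q (τ w) = q w

theorem IsSiblingPairing.not_mutual_apply (hτ : IsSiblingPairing q τ) {w : V} (hw : q (q w) ≠ w) :
    q (q (τ w)) ≠ τ w := fun h => by
  have hτw := hτ.apply_of_mutual _ h
  rw [hτ.involutive, hτ.parent_apply w hw] at hτw
  exact hw (by rw [← hτw, ← hτw])

theorem IsSiblingPairing.apply_ne_of_parent_ne (hτ : IsSiblingPairing q τ) {w : V} (hw : q w ≠ w) :
    τ w ≠ w := by
  by_cases hm : q (q w) = w
  · rwa [hτ.apply_of_mutual w hm]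
  · exact hτ.apply_ne w hm

end SiblingPairing

section ParentFun

variable {V : Type*} [Fintype V] {G : SimpleGraph V} [DecidableRel G.Adj]

variable (G) in
/-- `q` is a parent function of `G`: it fixes the vertices of even degree, sends every vertex of odd
degree to a neighbor, its parent, and every edge joins a vertex to its parent. Two adjacent vertices
of odd degree may be parents of each other. -/
structure IsParentFun (q : V → V) : Prop where
  even_degree_iff : ∀ c, Even (G.degree c) ↔ q c = c
  adj : ∀ c, q c ≠ c → G.Adj c (q c)
  cover : ∀ v w, G.Adj v w → q v = w ∨ q w = v

theorem exists_isParentFun (hG : G.IsAcyclic)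
    (huniq : ∀ v w : V, G.Reachable v w → Even (G.degree v) → Even (G.degree w) → v = w) :
    ∃ q, IsParentFun G q := by
  classical
  obtain ⟨root, hroot, hroot_even⟩ := exists_root huniq
  obtain ⟨p, hp, hadj, -, hcover⟩ := exists_parent_of_isAcyclic hG hroot
  have hp_even : ∀ v, Even (G.degree v) → p v = v := fun v hv =>
    (hp v).2 ⟨_, (hroot_even v hv).symm⟩
  have hnbr : ∀ v, ∃ w, ¬Even (G.degree v) → G.Adj v w := fun v => by
    by_cases hv : Even (G.degree v)
    · exact ⟨v, fun h => (h hv).elim⟩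
    · obtain ⟨w, hw⟩ := (G.degree_pos_iff_exists_adj v).1 (Nat.not_even_iff_odd.1 hv).pos
      exact ⟨w, fun _ => hw⟩
  choose n hn using hnbr
  -- A root of odd degree gets an arbitrary neighbor as its parent.
  let q : V → V := fun v => if p v = v ∧ ¬Even (G.degree v) then n v else p v
  have hq_of_ne : ∀ {v}, p v ≠ v → q v = p v := fun h => if_neg fun h' => h h'.1
  have hq_even : ∀ v, Even (G.degree v) → q v = v := fun v hv =>
    (if_neg fun h => h.2 hv).trans (hp_even v hv)
  have hq_odd : ∀ v, ¬Even (G.degree v) → G.Adj v (q v) := fun v hv => by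
    by_cases h : p v = v
    · rw [show q v = n v from if_pos ⟨h, hv⟩]
      exact hn v hv
    · rw [hq_of_ne h]
      exact hadj v h
  refine ⟨q, fun c => ⟨hq_even c, fun h => ?_⟩, fun c h => hq_odd c (mt (hq_even c) h),
    fun v w h => ?_⟩
  · by_contra hc
    exact (hq_odd c hc).ne h.symm
  · rcases hcover v w h with rfl | rfl
    · exact .inl (hq_of_ne h.ne')
    · exact .inr (hq_of_ne h.ne)

theorem even_card_neighborFinset_erase_iff [DecidableEq V] {c p : V} (h : p ≠ c → G.Adj c p) :
    Even ((G.neighborFinset c).erase p).card ↔ (Even (G.degree c) ↔ p = c) := by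
  rcases eq_or_ne p c with rfl | hne
  · rw [Finset.erase_eq_of_notMem (G.notMem_neighborFinset_self p),
      G.card_neighborFinset_eq_degree]
    simp
  · have hmem : p ∈ G.neighborFinset c := (G.mem_neighborFinset c p).2 (h hne)
    rw [← G.card_neighborFinset_eq_degree c, ← Finset.card_erase_add_one hmem, Nat.even_add_one]
    simp [hne]

variable {q τ : V → V}

theorem IsParentFun.eq_of_isPath (hq : IsParentFun G q) {u w : V} (hw : q w = w) (P : G.Walk u w)
    (hP : P.IsPath) (hu : q u ∉ P.support.tail) : u = w := by
  induction P with
  | nil => rfl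
  | @cons u x w h P ih =>
    rw [Walk.cons_isPath_iff] at hP
    rw [Walk.support_cons, List.tail_cons] at hu
    have hxu : q x = u := (hq.cover u x h).resolve_left fun hux => hu (hux ▸ P.start_mem_support)
    obtain rfl : x = w := ih hw hP.1 fun hx => hP.2 (hxu ▸ List.mem_of_mem_tail hx)
    exact hxu.symm.trans hw

theorem IsParentFun.eq_of_even_degree (hq : IsParentFun G q) {v w : V} (hvw : G.Reachable v w)
    (hv : Even (G.degree v)) (hw : Even (G.degree w)) : v = w := by
  obtain ⟨P, hP⟩ := hvw.exists_isPath
  refine hq.eq_of_isPath ((hq.even_degree_iff w).1 hw) P hP ?_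
  have hnodup := hP.support_nodup
  rw [← P.cons_tail_support, List.nodup_cons] at hnodup
  rw [(hq.even_degree_iff v).1 hv]
  exact hnodup.1

theorem isParentFun_iff (hG : G.IsAcyclic) : (∃ q, IsParentFun G q) ↔
    ∀ v w : V, G.Reachable v w → Even (G.degree v) → Even (G.degree w) → v = w :=
  ⟨fun ⟨_, hq⟩ _ _ => hq.eq_of_even_degree, exists_isParentFun hG⟩

theorem IsParentFun.exists_isSiblingPairing (hq : IsParentFun G q) : ∃ τ, IsSiblingPairing q τ := by
  classical
  choose ι hι hιne using fun c => exists_involutive_ne_iff_mem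
    ((even_card_neighborFinset_erase_iff (hq.adj c)).2 (hq.even_degree_iff c))
  have hmem : ∀ c w, w ∈ (G.neighborFinset c).erase (q c) ↔ q w = c ∧ q c ≠ w := fun c w => by
    rw [Finset.mem_erase, mem_neighborFinset]
    refine ⟨fun h => ⟨(hq.cover c w h.2).resolve_left h.1.symm, h.1.symm⟩, ?_⟩
    rintro ⟨rfl, hne⟩
    exact ⟨hne.symm, (hq.adj w fun h => hne (by rw [h, h])).symm⟩
  have hιq : ∀ w, q (q w) ≠ w → ι (q w) w ≠ w ∧ q (ι (q w) w) = q w ∧ q (q w) ≠ ι (q w) w :=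
    fun w hw => by
      have hne : ι (q w) w ≠ w := (hιne (q w) w).2 ((hmem _ w).2 ⟨rfl, hw⟩)
      have hsibling : ι (q w) (ι (q w) w) ≠ ι (q w) w := by rw [hι]; exact hne.symm
      exact ⟨hne, (hmem _ _).1 ((hιne _ _).1 hsibling)⟩
  refine ⟨fun w => if q (q w) = w then q w else ι (q w) w, fun w => ?_, fun w hw => if_pos hw,
    fun w hw => ?_, fun w hw => ?_⟩
  · by_cases hw : q (q w) = w
    · simp [hw]
    · obtain ⟨-, hparent, hne⟩ := hιq w hw
      simp [hw, hparent, hne, hι (q w) w]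
  · simpa [hw] using (hιq w hw).1
  · simpa [hw] using (hιq w hw).2.1

end ParentFun

section SignedPerm

variable {V : Type*} {G : SimpleGraph V} {σ : V ⊕ G.edgeSet → V ⊕ G.edgeSet}
  {s : V ⊕ G.edgeSet → ℝ}

variable (G) in
/-- The endomorphism of `𝔫_G` sending the basis vector of `b` to `s b` times that of `σ b`, when `σ`
is an involution. -/
def signedPerm (σ : V ⊕ G.edgeSet → V ⊕ G.edgeSet) (s : V ⊕ G.edgeSet → ℝ) :
    Niln G →ₗ[ℝ] Niln G where
  toFun x b := s (σ b) * x (σ b)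
  map_add' x y := by ext b; simp [mul_add]
  map_smul' c x := by ext b; simp [mul_left_comm]

theorem signedPerm_signedPerm (hσ : IsSignedInvolution σ s) (x : Niln G) :
    signedPerm G σ s (signedPerm G σ s x) = -x := by
  ext b
  simp only [signedPerm, LinearMap.coe_mk, AddHom.coe_mk, hσ.involutive b, hσ.sign_apply b,
    Pi.neg_apply]
  rw [← mul_assoc, neg_mul, hσ.sign_mul_self, neg_one_mul]

theorem signedPerm_basisVec [LinearOrder V] (hσ : IsSignedInvolution σ s) (b : V ⊕ G.edgeSet) :
    signedPerm G σ s (basisVec G b) = s b • basisVec G (σ b) := by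
  ext b'
  rcases eq_or_ne (σ b') b with rfl | h
  · simp [signedPerm, basisVec, hσ.involutive b']
  · have h' : b' ≠ σ b := fun h' => h (by rw [h', hσ.involutive])
    simp [signedPerm, basisVec, h, h']

end SignedPerm

section BracketVtx

variable {V : Type*} [LinearOrder V] {G : SimpleGraph V} [DecidableRel G.Adj]

theorem bracketVtx_of_not_adj {i j : V} (h : ¬G.Adj i j) : bracketVtx G i j = 0 :=
  dif_neg h

theorem bracketVtx_of_adj {i j : V} (h : G.Adj i j) :
    bracketVtx G i j = orderSign i j • basisVec G (inr ⟨s(i, j), h⟩) := by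
  unfold bracketVtx orderSign
  split_ifs <;> simp [edg, basisVec]

theorem bracketVtx_swap (i j : V) : bracketVtx G j i = -bracketVtx G i j := by
  by_cases h : G.Adj i j
  · have hedge : (⟨s(j, i), h.symm⟩ : G.edgeSet) = ⟨s(i, j), h⟩ := Subtype.ext Sym2.eq_swap
    rw [bracketVtx_of_adj h, bracketVtx_of_adj h.symm, orderSign_swap h.ne, hedge, neg_smul]
  · rw [bracketVtx_of_not_adj h, bracketVtx_of_not_adj (mt Adj.symm h), neg_zero]

theorem bracketVtx_apply_inr_ne_zero_iff {i j : V} {e : G.edgeSet} :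
    bracketVtx G i j (inr e) ≠ 0 ↔ (e : Sym2 V) = s(i, j) := by
  by_cases h : G.Adj i j
  · have hsign := left_ne_zero_of_mul_eq_one (orderSign_mul_self i j)
    rw [bracketVtx_of_adj h, Pi.smul_apply, smul_ne_zero_iff_right hsign]
    simp [basisVec, Pi.single_apply, Subtype.ext_iff]
  · simp only [bracketVtx_of_not_adj h, Pi.zero_apply, ne_eq, not_true_eq_false, false_iff]
    exact fun he => h (G.mem_edgeSet.1 (he ▸ e.2))

theorem signedPerm_bracketVtx {σ : V ⊕ G.edgeSet → V ⊕ G.edgeSet} {s : V ⊕ G.edgeSet → ℝ}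
    (hσ : IsSignedInvolution σ s) {i j k : V} {hij : G.Adj i j} {hik : G.Adj i k} {c : ℝ}
    (hσe : σ (inr ⟨s(i, j), hij⟩) = inr ⟨s(i, k), hik⟩)
    (hse : s (inr ⟨s(i, j), hij⟩) = c * (orderSign i j * orderSign i k)) :
    signedPerm G σ s (bracketVtx G i j) = c • bracketVtx G i k := by
  have hsign : orderSign i j * (c * (orderSign i j * orderSign i k)) = c * orderSign i k := by
    linear_combination c * orderSign i k * orderSign_mul_self i j
  rw [bracketVtx_of_adj hij, bracketVtx_of_adj hik, map_smul, signedPerm_basisVec hσ, hσe, hse,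
    smul_smul, smul_smul, hsign]

end BracketVtx

section Nijenhuis

variable {V : Type*} [Fintype V] [LinearOrder V] {G : SimpleGraph V} [DecidableRel G.Adj]

variable (G) in
/-- The Lie bracket of `𝔫_G` as a bilinear map. -/
noncomputable def bracketHom : Niln G →ₗ[ℝ] Niln G →ₗ[ℝ] Niln G :=
  LinearMap.mk₂ ℝ (bracket G)
    (fun x x' y => by simp [bracket, add_mul, add_smul, Finset.sum_add_distrib])
    (fun c x y => by simp [bracket, Finset.smul_sum, smul_smul, mul_assoc])
    (fun x y y' => by simp [bracket, mul_add, add_smul, Finset.sum_add_distrib])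
    (fun c x y => by simp [bracket, Finset.smul_sum, smul_smul, mul_left_comm])

theorem bracketHom_apply (x y : Niln G) : bracketHom G x y = bracket G x y :=
  rfl

theorem bracketHom_swap (x y : Niln G) : bracketHom G y x = -bracketHom G x y := by
  simp only [bracketHom_apply, bracket]
  rw [Finset.sum_comm, ← Finset.sum_neg_distrib]
  refine Finset.sum_congr rfl fun i _ => ?_
  rw [← Finset.sum_neg_distrib]
  refine Finset.sum_congr rfl fun j _ => ?_
  rw [bracketVtx_swap i j, smul_neg, mul_comm]

theorem bracketHom_self (x : Niln G) : bracketHom G x x = 0 :=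
  self_eq_neg.1 (bracketHom_swap x x)

theorem bracketHom_vertex (i j : V) :
    bracketHom G (basisVec G (inl i)) (basisVec G (inl j)) = bracketVtx G i j := by
  simp [bracketHom_apply, bracket, basisVec, Pi.single_apply, ite_smul]

theorem bracketHom_edge_left (e : G.edgeSet) (y : Niln G) :
    bracketHom G (basisVec G (inr e)) y = 0 := by
  simp [bracketHom_apply, bracket, basisVec]

theorem bracketHom_basisVec_eq_zero {b b' : V ⊕ G.edgeSet}
    (h : ∀ i j, b = inl i → b' = inl j → ¬G.Adj i j) :
    bracketHom G (basisVec G b) (basisVec G b') = 0 := by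
  rcases b with i | e
  · rcases b' with j | e
    · rw [bracketHom_vertex, bracketVtx_of_not_adj (h i j rfl rfl)]
    · rw [bracketHom_swap, bracketHom_edge_left, neg_zero]
  · exact bracketHom_edge_left _ _

theorem exists_vertex_of_bracketHom_apply_ne_zero {b b' : V ⊕ G.edgeSet} {e : G.edgeSet}
    (h : bracketHom G (basisVec G b) (basisVec G b') (inr e) ≠ 0) :
    ∃ i j, b = inl i ∧ b' = inl j ∧ (e : Sym2 V) = s(i, j) := by
  rcases b with i | e
  · rcases b' with j | e
    · rw [bracketHom_vertex, bracketVtx_apply_inr_ne_zero_iff] at h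
      exact ⟨i, j, rfl, rfl, h⟩
    · rw [bracketHom_swap, bracketHom_edge_left, neg_zero] at h
      exact (h rfl).elim
  · rw [bracketHom_edge_left] at h
    exact (h rfl).elim

/-- The Nijenhuis tensor of an endomorphism of `𝔫_G`, as a bilinear map. -/
noncomputable def nijenhuis (J : Niln G →ₗ[ℝ] Niln G) : Niln G →ₗ[ℝ] Niln G →ₗ[ℝ] Niln G :=
  bracketHom G + ((bracketHom G).compl₁₂ J LinearMap.id +
    (bracketHom G).compl₁₂ LinearMap.id J).compr₂ J - (bracketHom G).compl₁₂ J J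

theorem nijenhuis_apply (J : Niln G →ₗ[ℝ] Niln G) (x y : Niln G) :
    nijenhuis J x y = bracketHom G x y + J (bracketHom G (J x) y + bracketHom G x (J y)) -
      bracketHom G (J x) (J y) :=
  rfl

theorem nijenhuis_swap (J : Niln G →ₗ[ℝ] Niln G) (x y : Niln G) :
    nijenhuis J y x = -nijenhuis J x y := by
  simp only [nijenhuis_apply, bracketHom_swap x y, bracketHom_swap (J x) y,
    bracketHom_swap x (J y), bracketHom_swap (J x) (J y), map_add, map_neg]
  abel

section ComplexStructure

variable {J : Niln G →ₗ[ℝ] Niln G} (hJ : ∀ x, J (J x) = -x)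
include hJ

theorem nijenhuis_apply_left (x y : Niln G) : nijenhuis J (J x) y = -J (nijenhuis J x y) := by
  simp only [nijenhuis_apply, hJ, map_add, map_sub, map_neg, LinearMap.neg_apply]
  abel

theorem nijenhuis_apply_self (x : Niln G) : nijenhuis J (J x) x = 0 := by
  have hself : nijenhuis J x x = 0 := by
    simp [nijenhuis_apply, bracketHom_self, bracketHom_swap x (J x)]
  rw [nijenhuis_apply_left hJ, hself, map_zero, neg_zero]

theorem nijenhuis_eq_zero_of_commute {x y : Niln G}
    (hcomm : J (bracketHom G x y) = bracketHom G x (J y)) (hxy : bracketHom G (J x) y = 0)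
    (hxJy : bracketHom G (J x) (J y) = 0) : nijenhuis J x y = 0 := by
  rw [nijenhuis_apply, hxy, hxJy, zero_add, sub_zero, ← hcomm, hJ, add_neg_cancel]

end ComplexStructure

variable {J : Niln G →ₗ[ℝ] Niln G} {σ : V ⊕ G.edgeSet → V ⊕ G.edgeSet} {s : V ⊕ G.edgeSet → ℝ}

section SignedBasis

variable (hJσ : ∀ b, J (basisVec G b) = s b • basisVec G (σ b))
include hJσ

theorem nijenhuis_basisVec (b b' : V ⊕ G.edgeSet) :
    nijenhuis J (basisVec G b) (basisVec G b') = bracketHom G (basisVec G b) (basisVec G b') +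
      J (s b • bracketHom G (basisVec G (σ b)) (basisVec G b') +
        s b' • bracketHom G (basisVec G b) (basisVec G (σ b'))) -
      (s b * s b') • bracketHom G (basisVec G (σ b)) (basisVec G (σ b')) := by
  simp only [nijenhuis_apply, hJσ, map_smul, LinearMap.smul_apply, smul_smul, mul_comm (s b')]

theorem nijenhuis_basisVec_apply_left_iff (hJ : ∀ x, J (J x) = -x) {b : V ⊕ G.edgeSet}
    (hb : s b ≠ 0) (y : Niln G) :
    nijenhuis J (basisVec G (σ b)) y = 0 ↔ nijenhuis J (basisVec G b) y = 0 := by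
  have hJ_eq_zero : ∀ z, J z = 0 ↔ z = 0 := fun z =>
    ⟨fun h => by rw [← neg_eq_zero, ← hJ, h, map_zero], fun h => by rw [h, map_zero]⟩
  have h := nijenhuis_apply_left hJ (basisVec G b) y
  rw [hJσ, map_smul, LinearMap.smul_apply] at h
  rw [← smul_eq_zero_iff_right hb, h, neg_eq_zero, hJ_eq_zero]

theorem nijenhuis_basisVec_apply_right_iff (hJ : ∀ x, J (J x) = -x) {b : V ⊕ G.edgeSet}
    (hb : s b ≠ 0) (x : Niln G) :
    nijenhuis J x (basisVec G (σ b)) = 0 ↔ nijenhuis J x (basisVec G b) = 0 := by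
  rw [nijenhuis_swap, neg_eq_zero, nijenhuis_basisVec_apply_left_iff hJσ hJ hb, nijenhuis_swap,
    neg_eq_zero]

theorem nijenhuis_basisVec_eq_zero (hJ : ∀ x, J (J x) = -x) (hs : ∀ b, s b ≠ 0)
    (hN : ∀ v w, G.Adj v w → nijenhuis J (basisVec G (inl v)) (basisVec G (inl w)) = 0)
    (b b' : V ⊕ G.edgeSet) : nijenhuis J (basisVec G b) (basisVec G b') = 0 := by
  have hzero_of_bracket : ∀ c c', bracketHom G (basisVec G c) (basisVec G c') ≠ 0 →
      nijenhuis J (basisVec G c) (basisVec G c') = 0 := fun c c' => by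
    contrapose!
    refine fun h => bracketHom_basisVec_eq_zero ?_
    rintro i j rfl rfl hij
    exact h (hN i j hij)
  by_contra hne
  have h₁ := mt (hzero_of_bracket b b') hne
  have h₂ := mt (hzero_of_bracket (σ b) b')
    (mt (nijenhuis_basisVec_apply_left_iff hJσ hJ (hs b) _).1 hne)
  have h₃ := mt (hzero_of_bracket b (σ b'))
    (mt (nijenhuis_basisVec_apply_right_iff hJσ hJ (hs b') _).1 hne)
  have h₄ := mt (hzero_of_bracket (σ b) (σ b'))
    (mt (nijenhuis_basisVec_apply_right_iff hJσ hJ (hs b') _).1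
      (mt (nijenhuis_basisVec_apply_left_iff hJσ hJ (hs b) _).1 hne))
  rw [not_not] at h₁ h₂ h₃ h₄
  exact hne (by simp [nijenhuis_basisVec hJσ, h₁, h₂, h₃, h₄])

end SignedBasis

theorem nonempty_adaptedCS_of_nijenhuis_signedPerm (hσ : IsSignedInvolution σ s)
    (hN : ∀ v w, G.Adj v w →
      nijenhuis (signedPerm G σ s) (basisVec G (inl v)) (basisVec G (inl w)) = 0) :
    Nonempty (AdaptedCS G) := by
  have hzero : nijenhuis (signedPerm G σ s) = 0 := by
    refine (Pi.basisFun ℝ (V ⊕ G.edgeSet)).ext fun b =>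
      (Pi.basisFun ℝ (V ⊕ G.edgeSet)).ext fun b' => ?_
    rw [Pi.basisFun_apply, Pi.basisFun_apply]
    exact nijenhuis_basisVec_eq_zero (signedPerm_basisVec hσ) (signedPerm_signedPerm hσ)
      hσ.sign_ne_zero hN b b'
  refine ⟨⟨signedPerm G σ s, signedPerm_signedPerm hσ, fun x y => ?_, fun b => ?_⟩⟩
  · exact congrArg (fun N => N x y) hzero
  · rw [signedPerm_basisVec hσ]
    rcases mul_self_eq_one_iff.1 (hσ.sign_mul_self b) with h | h
    · exact .inl ⟨σ b, by rw [h, one_smul]⟩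
    · exact .inr ⟨σ b, by rw [h, neg_one_smul]⟩

end Nijenhuis

section EdgeMate

variable {V : Type*} [Fintype V] {G : SimpleGraph V} [DecidableRel G.Adj] {q τ : V → V}

theorem IsParentFun.adj_parent (hq : IsParentFun G q) {w : V} (hw : q w ≠ w) : G.Adj (q w) w :=
  (hq.adj w hw).symm

theorem IsParentFun.exists_child (hq : IsParentFun G q) (e : G.edgeSet) :
    ∃ w, (e : Sym2 V) = s(q w, w) := by
  rcases e with ⟨e, he⟩
  induction e using Sym2.ind with | _ v w
  rcases hq.cover v w he with rfl | rfl
  · exact ⟨v, Sym2.eq_swap⟩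
  · exact ⟨w, rfl⟩

/-- The endpoint of the edge `e` whose parent is the other endpoint. If the endpoints are parents of
each other, this is an arbitrary one of them. -/
noncomputable def IsParentFun.child (hq : IsParentFun G q) (e : G.edgeSet) : V :=
  (hq.exists_child e).choose

theorem IsParentFun.coe_eq_parent_child (hq : IsParentFun G q) (e : G.edgeSet) :
    (e : Sym2 V) = s(q (hq.child e), hq.child e) :=
  (hq.exists_child e).choose_spec

theorem IsParentFun.child_eq (hq : IsParentFun G q) {e : G.edgeSet} {w : V}
    (he : (e : Sym2 V) = s(q w, w)) (hw : q (q w) ≠ w) : hq.child e = w := by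
  rw [hq.coe_eq_parent_child e, Sym2.eq_iff] at he
  rcases he with ⟨-, h⟩ | ⟨h, h'⟩
  · exact h
  · exact absurd (by rw [← h', h]) hw

theorem IsParentFun.adj_parent_sibling (hq : IsParentFun G q) (hτ : IsSiblingPairing q τ) {w : V}
    (hw : q (q w) ≠ w) : G.Adj (q w) (τ w) := by
  have hne : q (τ w) ≠ τ w := fun h =>
    hτ.not_mutual_apply hw (by rw [h, h])
  exact hτ.parent_apply w hw ▸ hq.adj_parent hne

open Classical in
/-- The edge joining the sibling `τ w` of `w` to the parent `q w`, for an edge `e` joining a vertex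
`w` to its parent. If `w` and `q w` are parents of each other, this is `e` itself. -/
noncomputable def IsParentFun.mate (hq : IsParentFun G q) (hτ : IsSiblingPairing q τ)
    (e : G.edgeSet) : G.edgeSet :=
  if h : q (q (hq.child e)) = hq.child e then e
  else ⟨s(q (hq.child e), τ (hq.child e)), hq.adj_parent_sibling hτ h⟩

variable (hq : IsParentFun G q) (hτ : IsSiblingPairing q τ) {e : G.edgeSet}

theorem IsParentFun.mate_of_mutual (h : q (q (hq.child e)) = hq.child e) : hq.mate hτ e = e :=
  dif_pos h

theorem IsParentFun.coe_mate (h : q (q (hq.child e)) ≠ hq.child e) :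
    (hq.mate hτ e : Sym2 V) = s(q (hq.child e), τ (hq.child e)) := by
  rw [mate, dif_neg h]

theorem IsParentFun.child_mate (h : q (q (hq.child e)) ≠ hq.child e) :
    hq.child (hq.mate hτ e) = τ (hq.child e) :=
  hq.child_eq (by rw [hq.coe_mate hτ h, hτ.parent_apply _ h]) (hτ.not_mutual_apply h)

theorem IsParentFun.mate_ne_iff : hq.mate hτ e ≠ e ↔ q (q (hq.child e)) ≠ hq.child e := by
  refine ⟨mt (hq.mate_of_mutual hτ), fun h heq => hτ.apply_ne _ h ?_⟩
  rw [← hq.child_mate hτ h, heq]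

theorem IsParentFun.mate_involutive : Involutive (hq.mate hτ) := fun e => by
  by_cases h : q (q (hq.child e)) = hq.child e
  · simp only [hq.mate_of_mutual hτ h]
  · have h' : q (q (hq.child (hq.mate hτ e))) ≠ hq.child (hq.mate hτ e) := by
      rw [hq.child_mate hτ h]
      exact hτ.not_mutual_apply h
    refine Subtype.ext ?_
    rw [hq.coe_mate hτ h', hq.child_mate hτ h, hτ.parent_apply _ h, hτ.involutive,
      ← hq.coe_eq_parent_child e]

variable [LinearOrder V]

/-- `σ` and `s` form a signed involution of the basis of `𝔫_G` lifting the sibling pairing `τ`: it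
pairs every vertex `w` having a parent with `τ w`, and maps `[q w, w]` to the corresponding multiple
of `[q w, τ w]` unless `w` and `q w` are parents of each other. -/
structure IsSignedLift (q τ : V → V) (σ : V ⊕ G.edgeSet → V ⊕ G.edgeSet)
    (s : V ⊕ G.edgeSet → ℝ) : Prop extends IsSignedInvolution σ s where
  apply_vertex : ∀ w, q w ≠ w → σ (inl w) = inl (τ w)
  apply_bracket : ∀ w, q (q w) ≠ w →
    signedPerm G σ s (bracketVtx G (q w) w) = s (inl w) • bracketVtx G (q w) (τ w)

/-- The sign of an edge `e` joining a vertex `w` to its parent `q w`, chosen so that the signed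
permutation sending `e` to its mate sends `[q w, w]` to `[q w, τ w]` times the sign of `w`. -/
noncomputable def IsParentFun.edgeSign (τ : V → V) (e : G.edgeSet) : ℝ :=
  orderSign (hq.child e) (τ (hq.child e)) *
    (orderSign (q (hq.child e)) (hq.child e) * orderSign (q (hq.child e)) (τ (hq.child e)))

theorem IsParentFun.edgeSign_mul_self : hq.edgeSign τ e * hq.edgeSign τ e = 1 := by
  unfold edgeSign
  rw [mul_mul_mul_comm, orderSign_mul_self, mul_mul_mul_comm, orderSign_mul_self,
    orderSign_mul_self, one_mul, one_mul]

theorem IsParentFun.edgeSign_mate (h : q (q (hq.child e)) ≠ hq.child e) :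
    hq.edgeSign τ (hq.mate hτ e) = -hq.edgeSign τ e := by
  unfold edgeSign
  rw [hq.child_mate hτ h, hτ.parent_apply _ h, hτ.involutive,
    orderSign_swap (hτ.apply_ne _ h).symm]
  ring

include hq hτ in
theorem IsParentFun.exists_isSignedLift (hcard : Even (Fintype.card (V ⊕ G.edgeSet))) :
    ∃ (σ : V ⊕ G.edgeSet → V ⊕ G.edgeSet) (s : V ⊕ G.edgeSet → ℝ), IsSignedLift q τ σ s := by
  obtain ⟨σ, s, hσ, hext⟩ := exists_isSignedInvolution_extending hcard
    (ρ := Sum.map τ (hq.mate hτ))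
    (s := Sum.elim (fun w => orderSign w (τ w)) (hq.edgeSign τ))
    (by rw [Involutive, Sum.forall]; simp [hτ.involutive _, hq.mate_involutive hτ _])
    (by simp [orderSign_mul_self, hq.edgeSign_mul_self])
    (by
      rintro (w | e) h
      · have hw : τ w ≠ w := by simpa using h
        simpa [hτ.involutive w] using orderSign_swap hw.symm
      · have he : hq.mate hτ e ≠ e := by simpa using h
        simpa using hq.edgeSign_mate hτ ((hq.mate_ne_iff hτ).1 he))
  have hvertex : ∀ w, q w ≠ w → σ (inl w) = inl (τ w) ∧ s (inl w) = orderSign w (τ w) :=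
    fun w hw => hext (inl w) (by simpa using hτ.apply_ne_of_parent_ne hw)
  refine ⟨σ, s, hσ, fun w hw => (hvertex w hw).1, fun w hw => ?_⟩
  have hne : q w ≠ w := fun h => hw (by rw [h, h])
  let e : G.edgeSet := ⟨s(q w, w), hq.adj_parent hne⟩
  have hchild : hq.child e = w := hq.child_eq rfl hw
  have hmutual : q (q (hq.child e)) ≠ hq.child e := by rwa [hchild]
  have hmate : hq.mate hτ e = ⟨s(q w, τ w), hq.adj_parent_sibling hτ hw⟩ :=
    Subtype.ext (by rw [hq.coe_mate hτ hmutual, hchild])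
  obtain ⟨hσe, hse⟩ := hext (inr e) (by simpa using (hq.mate_ne_iff hτ).2 hmutual)
  rw [Sum.map_inr, hmate] at hσe
  rw [Sum.elim_inr, edgeSign, hchild, ← (hvertex w hne).2] at hse
  exact signedPerm_bracketVtx hσ hσe hse

end EdgeMate

section Sufficiency

variable {V : Type*} [Fintype V] [LinearOrder V] {G : SimpleGraph V} [DecidableRel G.Adj]
  {q τ : V → V} {σ : V ⊕ G.edgeSet → V ⊕ G.edgeSet} {s : V ⊕ G.edgeSet → ℝ}

theorem IsParentFun.not_adj_of_apply_parent_eq (hq : IsParentFun G q) (hτ : IsSiblingPairing q τ)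
    (hσ : IsSignedLift q τ σ s) {u w : V} (hw : q (q w) ≠ w) (hu : σ (inl (q w)) = inl u) :
    ¬G.Adj u w := by
  intro huw
  rcases hq.cover u w huw with rfl | rfl
  · have hτu : τ u = q (q u) :=
      inl.inj (by rw [← hσ.apply_vertex u huw.ne', ← hu, hσ.involutive])
    by_cases hm : q (q u) = u
    · exact hw (by rw [hm])
    · exact hw (by rw [← hτu, hτ.parent_apply u hm])
  · exact hσ.apply_ne _ hu

theorem IsParentFun.nijenhuis_parent_eq_zero (hq : IsParentFun G q) (hτ : IsSiblingPairing q τ)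
    (hσ : IsSignedLift q τ σ s) {w : V} (hw : q w ≠ w) :
    nijenhuis (signedPerm G σ s) (basisVec G (inl (q w))) (basisVec G (inl w)) = 0 := by
  have hJ := signedPerm_basisVec hσ.toIsSignedInvolution
  have hJJ := signedPerm_signedPerm hσ.toIsSignedInvolution
  by_cases hm : q (q w) = w
  · have hpartner : σ (inl w) = inl (q w) := by
      rw [hσ.apply_vertex w hw, hτ.apply_of_mutual w hm]
    rw [← hpartner, ← smul_eq_zero_iff_right (hσ.sign_ne_zero (inl w)), ← LinearMap.smul_apply,
      ← map_smul, ← hJ]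
    exact nijenhuis_apply_self hJJ _
  have hbracket : ∀ {x}, q (q x) ≠ x → q x = q w →
      bracketHom G (basisVec G (σ (inl (q w)))) (basisVec G (inl x)) = 0 := fun hx hxw =>
    bracketHom_basisVec_eq_zero fun u _ hu hj =>
      inl.inj hj ▸ hq.not_adj_of_apply_parent_eq hτ hσ hx (hxw ▸ hu)
  refine nijenhuis_eq_zero_of_commute hJJ ?_ ?_ ?_
  · rw [hJ, hσ.apply_vertex w hw, map_smul, bracketHom_vertex, bracketHom_vertex,
      hσ.apply_bracket w hm]
  · rw [hJ, map_smul, LinearMap.smul_apply, hbracket hm rfl, smul_zero]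
  · rw [hJ, hJ, hσ.apply_vertex w hw, map_smul, map_smul, LinearMap.smul_apply,
      hbracket (hτ.not_mutual_apply hm) (hτ.parent_apply w hm), smul_zero, smul_zero]

theorem IsParentFun.nonempty_adaptedCS (hq : IsParentFun G q)
    (hcard : Even (Fintype.card (V ⊕ G.edgeSet))) : Nonempty (AdaptedCS G) := by
  obtain ⟨τ, hτ⟩ := hq.exists_isSiblingPairing
  obtain ⟨σ, s, hσ⟩ := hq.exists_isSignedLift hτ hcard
  refine nonempty_adaptedCS_of_nijenhuis_signedPerm hσ.toIsSignedInvolution fun v w hvw => ?_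
  rcases hq.cover v w hvw with rfl | rfl
  · rw [nijenhuis_swap, neg_eq_zero]
    exact hq.nijenhuis_parent_eq_zero hτ hσ hvw.ne'
  · exact hq.nijenhuis_parent_eq_zero hτ hσ hvw.ne

end Sufficiency

section Necessity

variable {V : Type*} [Fintype V] [LinearOrder V] {G : SimpleGraph V} [DecidableRel G.Adj]
  (Jc : AdaptedCS G)

theorem AdaptedCS.exists_J_basisVec_eq (b : V ⊕ G.edgeSet) :
    ∃ (b' : V ⊕ G.edgeSet) (t : ℝ), t * t = 1 ∧ Jc.J (basisVec G b) = t • basisVec G b' := by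
  rcases Jc.adapted b with ⟨b', h⟩ | ⟨b', h⟩
  · exact ⟨b', 1, one_mul 1, by rw [h, one_smul]⟩
  · exact ⟨b', -1, by norm_num, by rw [h, neg_one_smul]⟩

/-- The basis element to which an adapted complex structure sends `b`, up to sign. -/
noncomputable def AdaptedCS.partner (b : V ⊕ G.edgeSet) : V ⊕ G.edgeSet :=
  (Jc.exists_J_basisVec_eq b).choose

/-- The sign with which an adapted complex structure sends `b` to its partner. -/
noncomputable def AdaptedCS.sign (b : V ⊕ G.edgeSet) : ℝ :=
  (Jc.exists_J_basisVec_eq b).choose_spec.choose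

theorem AdaptedCS.J_basisVec (b : V ⊕ G.edgeSet) :
    Jc.J (basisVec G b) = Jc.sign b • basisVec G (Jc.partner b) :=
  (Jc.exists_J_basisVec_eq b).choose_spec.choose_spec.2

theorem AdaptedCS.isSignedInvolution : IsSignedInvolution Jc.partner Jc.sign := by
  have hsign : ∀ b, Jc.sign b * Jc.sign b = 1 := fun b =>
    (Jc.exists_J_basisVec_eq b).choose_spec.choose_spec.1
  have hsq : ∀ b, (Jc.sign b * Jc.sign (Jc.partner b)) • basisVec G (Jc.partner (Jc.partner b)) =
      -basisVec G b := fun b => by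
    rw [← Jc.j_squared, Jc.J_basisVec, map_smul, Jc.J_basisVec, smul_smul]
  have hinv : Involutive Jc.partner := fun b => by
    by_contra hne
    have hcoord := congrFun (hsq b) b
    simp [basisVec, Ne.symm hne] at hcoord
  refine ⟨hinv, hsign, fun b => ?_⟩
  have hcoord := congrFun (hsq b) b
  simp only [hinv b, basisVec, Pi.smul_apply, Pi.neg_apply, Pi.single_eq_same, smul_eq_mul,
    mul_one] at hcoord
  linear_combination Jc.sign b * hcoord - Jc.sign (Jc.partner b) * hsign b

theorem AdaptedCS.even_card (Jc : AdaptedCS G) : Even (Fintype.card (V ⊕ G.edgeSet)) :=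
  Jc.isSignedInvolution.even_card

theorem AdaptedCS.nijenhuis_vertex (v w : V) :
    bracketVtx G v w + Jc.J (Jc.sign (inl v) •
        bracketHom G (basisVec G (Jc.partner (inl v))) (basisVec G (inl w)) +
      Jc.sign (inl w) • bracketHom G (basisVec G (inl v)) (basisVec G (Jc.partner (inl w)))) -
      (Jc.sign (inl v) * Jc.sign (inl w)) •
        bracketHom G (basisVec G (Jc.partner (inl v))) (basisVec G (Jc.partner (inl w))) = 0 := by
  rw [← bracketHom_vertex, ← nijenhuis_basisVec Jc.J_basisVec]
  exact Jc.integrable _ _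

/-- A neighbor `w` of `c` is a parent of `c` if the partner of `c` is a vertex equal or adjacent to
`w`. -/
def AdaptedCS.IsParent (c w : V) : Prop :=
  G.Adj c w ∧ ∃ c', Jc.partner (inl c) = inl c' ∧ (w = c' ∨ G.Adj w c')

variable {Jc}

theorem AdaptedCS.ne_of_partner_eq {c c' : V} (h : Jc.partner (inl c) = inl c') : c ≠ c' := by
  rintro rfl
  exact Jc.isSignedInvolution.apply_ne _ h

theorem AdaptedCS.partner_eq_symm {c c' : V} (h : Jc.partner (inl c) = inl c') :
    Jc.partner (inl c') = inl c := by
  rw [← h, Jc.isSignedInvolution.involutive]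

theorem AdaptedCS.IsParent.unique (hG : G.IsAcyclic) {c w z : V} (hw : Jc.IsParent c w)
    (hz : Jc.IsParent c z) : w = z := by
  obtain ⟨hcw, c', hc', hwc'⟩ := hw
  obtain ⟨hcz, c'', hc'', hzc'⟩ := hz
  obtain rfl := inl.inj (hc'.symm.trans hc'')
  exact eq_of_isAcyclic_of_adj_of_eq_or_adj hG (ne_of_partner_eq hc') hcw hwc' hcz hzc'

theorem AdaptedCS.bracketHom_partner_eq_zero {c w : V} (hcw : G.Adj c w)
    (h : ¬Jc.IsParent c w) :
    bracketHom G (basisVec G (Jc.partner (inl c))) (basisVec G (inl w)) = 0 :=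
  bracketHom_basisVec_eq_zero fun c' _ hc' hw hadj =>
    h ⟨hcw, c', hc', .inr (inl.inj hw ▸ hadj.symm)⟩

theorem AdaptedCS.isParent_or_isParent {v w : V} (hvw : G.Adj v w) :
    Jc.IsParent v w ∨ Jc.IsParent w v := by
  by_contra! ⟨hnv, hnw⟩
  have hbracket := Jc.nijenhuis_vertex v w
  rw [bracketHom_swap (basisVec G (Jc.partner (inl w))), bracketHom_partner_eq_zero hvw hnv,
    bracketHom_partner_eq_zero hvw.symm hnw, neg_zero, smul_zero, smul_zero, add_zero, map_zero,
    add_zero, sub_eq_zero] at hbracket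
  have hpartners : bracketHom G (basisVec G (Jc.partner (inl v)))
      (basisVec G (Jc.partner (inl w))) (inr ⟨s(v, w), hvw⟩) ≠ 0 := fun h =>
    bracketVtx_apply_inr_ne_zero_iff.2 rfl (by rw [hbracket, Pi.smul_apply, h, smul_zero])
  obtain ⟨v', w', hv', -, hvw'⟩ := exists_vertex_of_bracketHom_apply_ne_zero hpartners
  rcases Sym2.eq_iff.1 hvw' with ⟨rfl, -⟩ | ⟨-, rfl⟩
  · exact ne_of_partner_eq hv' rfl
  · exact hnv ⟨hvw, w, hv', .inl rfl⟩

theorem AdaptedCS.sym2_eq_of_eq_J_bracketVtx {v w i j k l : V} {a b : ℝ} (ha : a ≠ 0) (hb : b ≠ 0)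
    (hvw : G.Adj v w) (hij : G.Adj i j) (hkl : G.Adj k l)
    (h : a • bracketVtx G i j + b • bracketVtx G k l = Jc.J (bracketVtx G v w)) :
    s(i, j) = s(k, l) := by
  by_contra hne
  have hcoord : ∀ e : G.edgeSet, (a • bracketVtx G i j + b • bracketVtx G k l) (inr e) ≠ 0 →
      inr e = Jc.partner (inr ⟨s(v, w), hvw⟩) := fun e he => by
    by_contra hne
    rw [h, bracketVtx_of_adj hvw, map_smul, Jc.J_basisVec] at he
    simp [basisVec, hne] at he
  have hij_kl : bracketVtx G k l (inr ⟨s(i, j), hij⟩) = 0 :=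
    not_ne_iff.1 (mt bracketVtx_apply_inr_ne_zero_iff.1 hne)
  have hkl_ij : bracketVtx G i j (inr ⟨s(k, l), hkl⟩) = 0 :=
    not_ne_iff.1 (mt bracketVtx_apply_inr_ne_zero_iff.1 (Ne.symm hne))
  have h₁ := hcoord ⟨s(i, j), hij⟩
    (by simp [hij_kl, ha, bracketVtx_apply_inr_ne_zero_iff.2])
  have h₂ := hcoord ⟨s(k, l), hkl⟩
    (by simp [hkl_ij, hb, bracketVtx_apply_inr_ne_zero_iff.2])
  exact hne (congrArg Subtype.val (inr.inj (h₁.trans h₂.symm)))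

theorem AdaptedCS.IsParent.partner_eq (hG : G.IsAcyclic) {v w : V} (hv : Jc.IsParent v w)
    (hw : Jc.IsParent w v) : Jc.partner (inl v) = inl w := by
  obtain ⟨hvw, v', hv', rfl | hwv'⟩ := hv
  · exact hv'
  obtain ⟨-, w', hw', rfl | hvw'⟩ := hw
  · exact partner_eq_symm hw'
  have hnadj : ¬G.Adj v' w' := fun h =>
    ne_of_partner_eq hw' (eq_of_isAcyclic_of_adj_of_eq_or_adj hG (ne_of_partner_eq hv') hvw
      (.inr hwv') hvw' (.inr h.symm))
  have hN := Jc.nijenhuis_vertex v w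
  simp only [hv', hw', bracketHom_vertex, bracketVtx_of_not_adj hnadj, smul_zero, sub_zero] at hN
  have hJ := congrArg Jc.J hN
  rw [map_add, Jc.j_squared, map_zero, ← sub_eq_add_neg, sub_eq_zero] at hJ
  have hsign := Jc.isSignedInvolution.sign_ne_zero
  rcases Sym2.eq_iff.1 (sym2_eq_of_eq_J_bracketVtx (hsign _) (hsign _) hvw hwv'.symm hvw' hJ.symm)
    with ⟨h, -⟩ | ⟨-, h⟩
  · exact (ne_of_partner_eq hv' h.symm).elim
  · exact (hvw.ne h.symm).elim

theorem AdaptedCS.exists_partner_of_not_isParent (hG : G.IsAcyclic) {c w : V} (hcw : G.Adj c w)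
    (hw : ¬Jc.IsParent c w) :
    ∃ w', Jc.partner (inl w) = inl w' ∧ G.Adj c w' ∧ ¬Jc.IsParent c w' := by
  obtain ⟨-, w', hw', rfl | hcw'⟩ := (isParent_or_isParent hcw).resolve_left hw
  · exact (hw ⟨hcw, w, partner_eq_symm hw', .inl rfl⟩).elim
  · refine ⟨w', hw', hcw', fun h => ?_⟩
    have hw'c : Jc.IsParent w' c := ⟨hcw'.symm, w, partner_eq_symm hw', .inr hcw⟩
    exact hcw.ne (inl.inj ((hw'c.partner_eq hG h).symm.trans (partner_eq_symm hw')))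

variable (Jc)

open Classical in
/-- The parent of `c` with respect to an adapted complex structure, and `c` itself if there is
none. -/
noncomputable def AdaptedCS.parent (c : V) : V :=
  if h : ∃ p, Jc.IsParent c p then h.choose else c

theorem AdaptedCS.isParent_parent {c : V} (h : Jc.parent c ≠ c) : Jc.IsParent c (Jc.parent c) := by
  unfold parent at h ⊢
  split_ifs at h ⊢ with hp
  · exact hp.choose_spec
  · exact (h rfl).elim

theorem AdaptedCS.isParent_iff (hG : G.IsAcyclic) {c w : V} (hcw : G.Adj c w) :
    Jc.IsParent c w ↔ Jc.parent c = w := by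
  refine ⟨fun h => ?_, ?_⟩
  · have hp : ∃ p, Jc.IsParent c p := ⟨w, h⟩
    rw [parent, dif_pos hp]
    exact hp.choose_spec.unique hG h
  · rintro rfl
    exact Jc.isParent_parent hcw.ne'

theorem AdaptedCS.even_card_neighborFinset_erase_parent (hG : G.IsAcyclic) (c : V) :
    Even ((G.neighborFinset c).erase (Jc.parent c)).card := by
  have hmem : ∀ w, w ∈ (G.neighborFinset c).erase (Jc.parent c) ↔
      G.Adj c w ∧ ¬Jc.IsParent c w := fun w => by
    rw [Finset.mem_erase, mem_neighborFinset, and_comm, ne_comm]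
    exact and_congr_right fun hcw => (Jc.isParent_iff hG hcw).symm.not
  have hpartner : ∀ w ∈ (G.neighborFinset c).erase (Jc.parent c), ∃ w',
      Jc.partner (inl w) = inl w' ∧ w' ∈ (G.neighborFinset c).erase (Jc.parent c) := fun w hw => by
    obtain ⟨hcw, hnw⟩ := (hmem w).1 hw
    obtain ⟨w', hw', hmem'⟩ := exists_partner_of_not_isParent hG hcw hnw
    exact ⟨w', hw', (hmem w').2 hmem'⟩
  refine even_card_of_involution (fun w => (Jc.partner (inl w)).elim id fun _ => w)
    (fun w hw => ?_) (fun w hw => ?_) fun w hw => ?_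
  all_goals obtain ⟨w', hw', hmem'⟩ := hpartner w hw
  · simpa [hw'] using hmem'
  · simpa [hw'] using (ne_of_partner_eq hw').symm
  · simp [hw', partner_eq_symm hw']

theorem AdaptedCS.isParentFun (hG : G.IsAcyclic) : IsParentFun G Jc.parent := by
  have hadj : ∀ c, Jc.parent c ≠ c → G.Adj c (Jc.parent c) := fun c h => (Jc.isParent_parent h).1
  refine ⟨fun c => ?_, hadj, fun v w hvw => ?_⟩
  · exact (even_card_neighborFinset_erase_iff (hadj c)).1
      (Jc.even_card_neighborFinset_erase_parent hG c)
  · rw [← Jc.isParent_iff hG hvw, ← Jc.isParent_iff hG hvw.symm]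
    exact isParent_or_isParent hvw

end Necessity

end GraphLie

namespace GraphLie

/-- A forest `G` (a finite simple graph with no cycles) admits an
adapted complex structure if and only if it has an even number of connected components
and each connected component contains at most one vertex of even degree. -/
theorem statement19 {V : Type*} [Fintype V] [LinearOrder V] (G : SimpleGraph V)
    [DecidableRel G.Adj] (hG : G.IsAcyclic) :
    Nonempty (AdaptedCS G) ↔
      (Even (Nat.card G.ConnectedComponent) ∧
       ∀ v w : V, G.Reachable v w → Even (G.degree v) → Even (G.degree w) → v = w) := by
  have hcard : Even (Fintype.card (V ⊕ G.edgeSet)) ↔ Even (Nat.card G.ConnectedComponent) := by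
    rw [← Nat.card_eq_fintype_card, Nat.card_sum, ← card_edgeSet_add_card_connectedComponent hG]
    simp only [Nat.even_add]
    tauto
  rw [← hcard, ← isParentFun_iff hG]
  constructor
  · rintro ⟨Jc⟩
    exact ⟨Jc.even_card, Jc.parent, Jc.isParentFun hG⟩
  · rintro ⟨heven, q, hq⟩
    exact hq.nonempty_adaptedCS heven

end GraphLie
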